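/- arXiv:2410.14574 — 3 statements merged into one kernel-verified Lean document; each statement's English description precedes it below -/
import Mathlib

section
/- Let μ and s be real numbers with -1 < μ < 1 and 0 < s < 2 + 2μ. Then every real sequence (x_t)_{t≥0} satisfying the linear recurrence x_{t+2} = ((1+μ) - s)·x_{t+1} - μ·x_t for all t ≥ 0 converges to 0 as t → ∞. -/
open Filter

/-- Forward direction of Proposition 1: if `-1 < μ < 1` and `0 < s < 2 + 2μ`,
every real solution of `x_{t+2} = ((1+μ) - s)·x_{t+1} - μ·x_t` tends to `0`. -/
theorem stmt_3 (μ s : ℝ) (hμ : -1 < μ ∧ μ < 1) (hs : 0 < s ∧ s < 2 + 2 * μ)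
    (x : ℕ → ℝ) (hx : ∀ t, x (t + 2) = ((1 + μ) - s) * x (t + 1) - μ * x t) :
    Tendsto x atTop (nhds 0) := by
  obtain ⟨h1, h2⟩ := hμ
  obtain ⟨h3, h4⟩ := hs
  obtain ⟨a, ha⟩ : ∃ a, a = (1 + μ) - s := ⟨_, rfl⟩
  rw [← ha] at hx
  have ha1 : 0 < (1 + μ) - a := by linarith
  have ha2 : 0 < (1 + μ) + a := by linarith
  let V : ℕ → ℝ := fun t => (1 + μ) * (x t ^ 2 + x (t + 1) ^ 2) - 2 * a * x t * x (t + 1)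
  have hV : ∀ t, V t - V (t + 1) = (1 - μ) * (x (t + 2) - x t) ^ 2 := by
    intro t
    simp only [V, add_assoc, Nat.reduceAdd]
    rw [hx t]; ring
  have hV0 : ∀ t, 0 ≤ V t := by
    intro t
    have e : V t = (((1 + μ) - a) * (x t + x (t + 1)) ^ 2
      + ((1 + μ) + a) * (x t - x (t + 1)) ^ 2) / 2 := by
      simp only [V]; ring
    rw [e]; positivity
  have hanti : Antitone V := antitone_nat_of_succ_le fun t => by
    have := hV t
    have : 0 ≤ (1 - μ) * (x (t + 2) - x t) ^ 2 := mul_nonneg (by linarith) (sq_nonneg _)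
    linarith
  have hlim := tendsto_atTop_ciInf hanti ⟨0, by rintro _ ⟨t, rfl⟩; exact hV0 t⟩
  have hd := hlim.sub ((tendsto_add_atTop_iff_nat 1).2 hlim)
  simp only [hV, sub_self] at hd
  have hsq : Tendsto (fun t => (x (t + 2) - x t) ^ 2) atTop (nhds 0) := by
    have h := hd.const_mul (1 - μ)⁻¹
    have hne : (1 - μ) ≠ 0 := by linarith
    simpa [inv_mul_cancel_left₀ hne] using h
  have hw : Tendsto (fun t => x (t + 2) - x t) atTop (nhds 0) := by
    have h := hsq.sqrt
    simp only [Real.sqrt_sq_eq_abs, Real.sqrt_zero] at h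
    exact (tendsto_zero_iff_abs_tendsto_zero _).2 h
  have hw1 := (tendsto_add_atTop_iff_nat 1).2 hw
  have hne : (a ^ 2 - (1 + μ) ^ 2) ≠ 0 := by nlinarith [mul_pos ha1 ha2]
  have hfin := (((hw.const_mul (1 + μ)).add (hw1.const_mul a)).sub
    (hw.const_mul (a ^ 2))).const_mul (a ^ 2 - (1 + μ) ^ 2)⁻¹
  simp only [mul_zero, add_zero, sub_zero] at hfin
  refine hfin.congr fun t => ?_
  rw [inv_mul_eq_iff_eq_mul₀ hne]
  have e1 : x (t + 1 + 2) = a * x (t + 2) - μ * x (t + 1) := hx (t + 1)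
  rw [e1, hx t]; ring
end

section
/- Let μ and s be real numbers such that it is not the case that both -1 < μ < 1 and 0 < s < 2 + 2μ. Then there exists a real sequence (x_t)_{t≥0} satisfying the linear recurrence x_{t+2} = ((1+μ) - s)·x_{t+1} - μ·x_t for all t ≥ 0 which does not converge to 0 as t → ∞. -/
open Filter

def auxSeq (a b : ℝ) : ℕ → ℝ
  | 0 => 0
  | 1 => 1
  | (n + 2) => a * auxSeq a b (n + 1) - b * auxSeq a b n

lemma auxSeq_cas (a b : ℝ) (n : ℕ) :
    auxSeq a b (n + 1) ^ 2 - auxSeq a b n * auxSeq a b (n + 2) = b ^ n := by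
  induction n with
  | zero => simp [auxSeq]
  | succ k ih =>
    have e1 : auxSeq a b (k + 1 + 2) = a * auxSeq a b (k + 2) - b * auxSeq a b (k + 1) := rfl
    have e2 : auxSeq a b (k + 1 + 1) = a * auxSeq a b (k + 1) - b * auxSeq a b k := rfl
    have e3 : auxSeq a b (k + 2) = a * auxSeq a b (k + 1) - b * auxSeq a b k := rfl
    rw [e1, e2, pow_succ b k, ← ih, e3]
    ring

lemma aux_root (a b r : ℝ) (hr : r ^ 2 = a * r - b) (h1 : 1 ≤ |r|) :
    ∃ x : ℕ → ℝ, (∀ t, x (t + 2) = a * x (t + 1) - b * x t) ∧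
      ¬ Tendsto x atTop (nhds 0) := by
  refine ⟨fun t => r ^ t, fun t => ?_, fun ht => ?_⟩
  · simp only [pow_add, hr]
    ring
  · have h2 := ht.abs
    rw [abs_zero] at h2
    have h3 : (1 : ℝ) ≤ 0 := ge_of_tendsto' h2 fun t => by
      rw [abs_pow]
      exact one_le_pow₀ h1
    linarith

/-- Converse direction of Proposition 1: if it is not the case that both
`-1 < μ < 1` and `0 < s < 2 + 2μ`, then the recurrence
`x_{t+2} = ((1+μ) - s)·x_{t+1} - μ·x_t` admits a real solution that does not
converge to `0`. -/
theorem stmt_4 (μ s : ℝ)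
    (h : ¬ ((-1 < μ ∧ μ < 1) ∧ (0 < s ∧ s < 2 + 2 * μ))) :
    ∃ x : ℕ → ℝ,
      (∀ t, x (t + 2) = ((1 + μ) - s) * x (t + 1) - μ * x t) ∧
      ¬ Tendsto x atTop (nhds 0) := by
  by_cases hs : s ≤ 0
  · have hD : (2 - (1 + μ - s)) ^ 2 ≤ (1 + μ - s) ^ 2 - 4 * μ := by nlinarith
    have h0 : 0 ≤ (1 + μ - s) ^ 2 - 4 * μ := le_trans (sq_nonneg _) hD
    have h1 := Real.le_sqrt_of_sq_le hD
    have h2 := Real.sq_sqrt h0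
    refine aux_root _ _ (((1 + μ - s) + √((1 + μ - s) ^ 2 - 4 * μ)) / 2) ?_ ?_
    · linear_combination h2 / 4
    · exact le_trans (by linarith) (le_abs_self _)
  by_cases hs2 : 2 + 2 * μ ≤ s
  · have hD : (2 + (1 + μ - s)) ^ 2 ≤ (1 + μ - s) ^ 2 - 4 * μ := by nlinarith
    have h0 : 0 ≤ (1 + μ - s) ^ 2 - 4 * μ := le_trans (sq_nonneg _) hD
    have h1 := Real.le_sqrt_of_sq_le hD
    have h2 := Real.sq_sqrt h0
    refine aux_root _ _ (((1 + μ - s) - √((1 + μ - s) ^ 2 - 4 * μ)) / 2) ?_ ?_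
    · linear_combination h2 / 4
    · exact le_trans (by linarith) (neg_le_abs _)
  push Not at hs hs2
  have hμ : 1 ≤ μ := by
    by_contra hc
    exact h ⟨⟨by linarith, by linarith⟩, hs, hs2⟩
  refine ⟨auxSeq (1 + μ - s) μ, fun t => rfl, fun ht => ?_⟩
  have t1 := (tendsto_add_atTop_iff_nat 1).2 ht
  have t2 := (tendsto_add_atTop_iff_nat 2).2 ht
  have t3 := (t1.pow 2).sub (ht.mul t2)
  have h3 := ge_of_tendsto' t3 (b := 1) fun t => by
    rw [auxSeq_cas]
    exact one_le_pow₀ hμ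
  norm_num at h3
end

section
/- Let μ and s be real numbers with s > 0 and μ ≥ (1 + √s)², where √ denotes the real square root. Then ((1+μ-s) + √((1+μ-s)² - 4μ)) / 2 > 1. (In particular, (1+μ-s)² - 4μ ≥ 0 and 1+μ-s ≥ 2 + 2√s under these hypotheses.) -/
/-- Case 1a of the proof of Lemma 1: if `s > 0` and `μ ≥ (1 + √s)²`, then the
larger eigenvalue `((1+μ-s) + √((1+μ-s)² - 4μ))/2` exceeds `1`; in particular
`(1+μ-s)² - 4μ ≥ 0` and `1+μ-s ≥ 2 + 2√s`. -/
theorem stmt_9 (μ s : ℝ) (hs : 0 < s) (hμ : (1 + Real.sqrt s) ^ 2 ≤ μ) :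
    1 < ((1 + μ - s) + Real.sqrt ((1 + μ - s) ^ 2 - 4 * μ)) / 2 ∧
      0 ≤ (1 + μ - s) ^ 2 - 4 * μ ∧
      2 + 2 * Real.sqrt s ≤ 1 + μ - s := by
  have hr : 0 < Real.sqrt s := Real.sqrt_pos.mpr hs
  have hsq : Real.sqrt s ^ 2 = s := Real.sq_sqrt hs.le
  have h1 : 2 * Real.sqrt s ≤ μ - 1 - s := by nlinarith
  have h2 : (2 * Real.sqrt s) ^ 2 ≤ (μ - 1 - s) ^ 2 :=
    pow_le_pow_left₀ (by positivity) h1 2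
  have h3 := Real.sqrt_nonneg ((1 + μ - s) ^ 2 - 4 * μ)
  refine ⟨by linarith, by nlinarith, by linarith⟩
end
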